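/- Let R be a finite commutative ring with γ_a(Γ(R)) = 2. Then Γ(R) is partitionable into global defensive alliances if and only if either ψ_g(Γ(R)) = 2 or R ≅ 𝔽₄ × 𝔽₄. -/

import Mathlib

open Classical

/-- The set of zero-divisors of `R` (including `0`). -/
def zeroDivisorSet (R : Type*) [CommRing R] : Set R :=
  {x : R | ∃ y : R, y ≠ 0 ∧ x * y = 0}

/-- Vertices of the zero-divisor graph: the nonzero zero-divisors of `R`. -/
abbrev ZDV (R : Type*) [CommRing R] : Type _ :=
  {x : R // x ≠ 0 ∧ ∃ y : R, y ≠ 0 ∧ x * y = 0}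

/-- The zero-divisor graph `Γ(R)` of a commutative ring `R`: vertices are the nonzero
zero-divisors, and distinct vertices `x`, `y` are adjacent iff `x * y = 0`. -/
def zdGraph (R : Type*) [CommRing R] : SimpleGraph (ZDV R) where
  Adj a b := a ≠ b ∧ (a : R) * (b : R) = 0
  symm := by
    constructor
    intro a b h
    exact ⟨h.1.symm, by rw [mul_comm]; exact h.2⟩
  loopless := by
    constructor
    intro a h
    exact h.1 rfl

/-- `degIn G S v` is the number of neighbors of `v` lying in `S`. -/
noncomputable def degIn {V : Type*} (G : SimpleGraph V) (S : Set V) (v : V) : ℕ :=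
  Set.ncard {u : V | u ∈ S ∧ G.Adj v u}

/-- `S` is a dominating set: every vertex outside `S` has a neighbor in `S`. -/
def IsDominatingSet {V : Type*} (G : SimpleGraph V) (S : Set V) : Prop :=
  ∀ v ∉ S, ∃ u ∈ S, G.Adj v u

/-- `S` is a defensive alliance: `S` is nonempty and every `v ∈ S` satisfies
`deg_S(v) + 1 ≥ deg_{Sᶜ}(v)`. -/
def IsDefensiveAlliance {V : Type*} (G : SimpleGraph V) (S : Set V) : Prop :=
  S.Nonempty ∧ ∀ v ∈ S, degIn G Sᶜ v ≤ degIn G S v + 1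

/-- A global defensive alliance is a defensive alliance that is also a dominating set. -/
def IsGlobalDefensiveAlliance {V : Type*} (G : SimpleGraph V) (S : Set V) : Prop :=
  IsDefensiveAlliance G S ∧ IsDominatingSet G S

/-- `P` is a partition of the vertex set of `G` into global defensive alliances. -/
def IsGDAPartition {V : Type*} (G : SimpleGraph V) (P : Finset (Set V)) : Prop :=
  (∀ S ∈ P, IsGlobalDefensiveAlliance G S) ∧
  (⋃₀ (P : Set (Set V)) = Set.univ) ∧
  ((P : Set (Set V)).Pairwise Disjoint)

/-- The global defensive alliance partition number `ψ_g(G)`: the maximum number of parts in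
a partition of the vertex set into global defensive alliances. -/
noncomputable def psiG {V : Type*} (G : SimpleGraph V) : ℕ :=
  sSup {n : ℕ | ∃ P : Finset (Set V), IsGDAPartition G P ∧ P.card = n}

/-- `G` is partitionable into global defensive alliances iff `ψ_g(G) ≥ 2`. -/
def PartitionableGDA {V : Type*} (G : SimpleGraph V) : Prop :=
  2 ≤ psiG G

/-- The global defensive alliance number `γ_a(G)`: the minimum cardinality of a global
defensive alliance. -/
noncomputable def gammaA {V : Type*} (G : SimpleGraph V) : ℕ :=
  sInf {n : ℕ | ∃ S : Set V, IsGlobalDefensiveAlliance G S ∧ S.ncard = n}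

/-
With `3` parts every vertex has a neighbor in each part, its own included, so all degrees are at
least `3` and all parts have at least `2` elements; hence there are at least `6` vertices. A global
defensive alliance of size `2` is then an edge `ab` whose endpoints have degree at most `3` and
dominate all vertices, so counting shows that the neighborhoods of `a` and `b` have `3` elements
each and partition the vertex set. Such an edge determines the ring: `I = ann a` and `J = ann b`
are disjoint ideals of order `4` whose union contains all zero-divisors, which forces them to be
prime, and the Chinese remainder theorem gives `R ≅ R/I × R/J`. Conversely, `a = (1, 0)` and
`b = (0, 1)` form such an edge in `Γ(𝔽₄ × 𝔽₄)`, and both `{a, b}` and its complement are global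
defensive alliances.
-/

/-- `G` has an edge between two vertices of degree `3` such that every vertex is adjacent to
exactly one of its endpoints. Adjacency of `a` and `b` is not demanded separately: as `a` is not
adjacent to itself, it lies in `G.neighborSet b`. -/
def HasCubicPerfectEdge {V : Type*} (G : SimpleGraph V) : Prop :=
  ∃ a b, IsCompl (G.neighborSet a) (G.neighborSet b) ∧
    (G.neighborSet a).ncard = 3 ∧ (G.neighborSet b).ncard = 3

section Graph

variable {V : Type*} {G : SimpleGraph V} {S : Set V} {P : Finset (Set V)} {a b v : V}

lemma codisjoint_neighborSet_iff :
    Codisjoint (G.neighborSet a) (G.neighborSet b) ↔ ∀ v, G.Adj a v ∨ G.Adj b v :=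
  codisjoint_iff.trans Set.eq_univ_iff_forall

lemma adj_of_codisjoint_neighborSet (h : Codisjoint (G.neighborSet a) (G.neighborSet b)) :
    G.Adj a b :=
  ((codisjoint_neighborSet_iff.1 h a).resolve_left G.irrefl).symm

lemma IsDominatingSet.codisjoint_neighborSet (h : IsDominatingSet G {a, b}) (hab : G.Adj a b) :
    Codisjoint (G.neighborSet a) (G.neighborSet b) := by
  refine codisjoint_neighborSet_iff.2 fun v => ?_
  by_cases hv : v ∈ ({a, b} : Set V)
  · rcases hv with rfl | rfl
    exacts [Or.inr hab.symm, Or.inl hab]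
  · obtain ⟨u, rfl | rfl, hvu⟩ := h v hv
    exacts [Or.inl hvu.symm, Or.inr hvu.symm]

lemma degIn_pair_le_one (h : Disjoint (G.neighborSet a) (G.neighborSet b)) (v : V) :
    degIn G {a, b} v ≤ 1 := by
  have hnot : ¬ (G.Adj v a ∧ G.Adj v b) := fun ⟨ha, hb⟩ =>
    Set.disjoint_left.1 h ha.symm hb.symm
  refine (Set.ncard_le_one (Set.toFinite _)).2 ?_
  rintro _ ⟨rfl | rfl, h₁⟩ _ ⟨rfl | rfl, h₂⟩
  exacts [rfl, (hnot ⟨h₁, h₂⟩).elim, (hnot ⟨h₂, h₁⟩).elim, rfl]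

lemma isGlobalDefensiveAlliance_compl_pair
    (h : Disjoint (G.neighborSet a) (G.neighborSet b))
    (ha : 2 ≤ (G.neighborSet a).ncard) (hb : 2 ≤ (G.neighborSet b).ncard) :
    IsGlobalDefensiveAlliance G {a, b}ᶜ := by
  have hdom : ∀ v ∈ ({a, b} : Set V), ∃ c ∈ ({a, b} : Set V)ᶜ, G.Adj v c := by
    rintro v (rfl | rfl)
    · obtain ⟨c, hc, hcb⟩ := Set.exists_ne_of_one_lt_ncard ha b
      exact ⟨c, by simp [hcb, (G.ne_of_adj hc).symm], hc⟩
    · obtain ⟨c, hc, hca⟩ := Set.exists_ne_of_one_lt_ncard hb a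
      exact ⟨c, by simp [hca, (G.ne_of_adj hc).symm], hc⟩
  refine ⟨⟨?_, fun v _ => ?_⟩, fun v hv => hdom v (not_not.1 hv)⟩
  · obtain ⟨c, hc, -⟩ := hdom a (Or.inl rfl)
    exact ⟨c, hc⟩
  · rw [compl_compl]
    exact (degIn_pair_le_one h v).trans (Nat.le_add_left 1 _)

lemma exists_isGlobalDefensiveAlliance_ncard_eq_gammaA (h : gammaA G ≠ 0) :
    ∃ S, IsGlobalDefensiveAlliance G S ∧ S.ncard = gammaA G :=
  Nat.sInf_mem (Nat.nonempty_of_pos_sInf (Nat.pos_of_ne_zero h))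

lemma IsGDAPartition.exists_mem (hP : IsGDAPartition G P) (v : V) : ∃ S ∈ P, v ∈ S :=
  Set.mem_sUnion.1 (hP.2.1 ▸ Set.mem_univ v)

variable [Finite V]

lemma bddAbove_card_isGDAPartition (G : SimpleGraph V) :
    BddAbove {n : ℕ | ∃ P : Finset (Set V), IsGDAPartition G P ∧ P.card = n} := by
  have := Fintype.ofFinite (Set V)
  exact ⟨Fintype.card (Set V), by rintro _ ⟨P, -, rfl⟩; exact P.card_le_univ⟩

lemma IsGDAPartition.card_le_psiG (hP : IsGDAPartition G P) : P.card ≤ psiG G :=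
  le_csSup (bddAbove_card_isGDAPartition G) ⟨P, hP, rfl⟩

lemma exists_isGDAPartition_card_eq_psiG (h : psiG G ≠ 0) :
    ∃ P, IsGDAPartition G P ∧ P.card = psiG G := by
  refine Nat.sSup_mem (Set.nonempty_iff_ne_empty.2 fun hempty => h ?_)
    (bddAbove_card_isGDAPartition G)
  rw [psiG, hempty, csSup_empty, bot_eq_zero]

lemma mul_card_le_ncard_of_pairwise_disjoint (hP : (P : Set (Set V)).Pairwise Disjoint)
    {A : Set V} {m : ℕ} (hm : ∀ T ∈ P, m ≤ (T ∩ A).ncard) : m * P.card ≤ A.ncard := by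
  have := Fintype.ofFinite V
  have hdisj : (P : Set (Set V)).PairwiseDisjoint fun T => (T ∩ A).toFinset := fun T hT U hU hTU =>
    Set.disjoint_toFinset.2 ((hP hT hU hTU).mono Set.inter_subset_left Set.inter_subset_left)
  calc m * P.card = ∑ _T ∈ P, m := by rw [Finset.sum_const, smul_eq_mul, mul_comm]
    _ ≤ ∑ T ∈ P, (T ∩ A).toFinset.card :=
      Finset.sum_le_sum fun T hT => (hm T hT).trans (Set.ncard_eq_toFinset_card' _).le
    _ = (P.biUnion fun T => (T ∩ A).toFinset).card := (Finset.card_biUnion hdisj).symm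
    _ ≤ A.toFinset.card := Finset.card_le_card <| Finset.biUnion_subset.2 fun T _ =>
      Set.toFinset_subset_toFinset.2 Set.inter_subset_right
    _ = A.ncard := (Set.ncard_eq_toFinset_card' A).symm

lemma degIn_add_degIn_compl (G : SimpleGraph V) (S : Set V) (v : V) :
    degIn G S v + degIn G Sᶜ v = (G.neighborSet v).ncard := by
  have h := Set.ncard_inter_add_ncard_sdiff_eq_ncard (G.neighborSet v) S
  rwa [Set.inter_comm, Set.sdiff_eq, Set.inter_comm _ Sᶜ] at h

lemma degIn_lt_ncard (hv : v ∈ S) : degIn G S v < S.ncard :=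
  Set.ncard_lt_ncard ⟨fun _ hu => hu.1, fun h => G.irrefl (h hv).2⟩ (Set.toFinite S)

lemma one_le_degIn (hb : b ∈ S) (hab : G.Adj a b) : 1 ≤ degIn G S a :=
  (Set.ncard_pos (Set.toFinite _)).2 ⟨b, hb, hab⟩

lemma IsDefensiveAlliance.ncard_neighborSet_lt (hS : IsDefensiveAlliance G S) (hv : v ∈ S) :
    (G.neighborSet v).ncard < 2 * S.ncard := by
  have := degIn_add_degIn_compl G S v
  have := hS.2 v hv
  have := degIn_lt_ncard (G := G) hv
  omega

lemma IsDefensiveAlliance.exists_adj_eq_pair (hS : IsDefensiveAlliance G S) (hcard : S.ncard = 2)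
    (hdeg : ∀ v ∈ S, 2 ≤ (G.neighborSet v).ncard) : ∃ a b, G.Adj a b ∧ S = {a, b} := by
  obtain ⟨a, ha⟩ := hS.1
  have hpos : 0 < degIn G S a := by
    have := degIn_add_degIn_compl G S a
    have := hS.2 a ha
    have := hdeg a ha
    omega
  obtain ⟨b, hb, hab⟩ := (Set.ncard_pos (Set.toFinite _)).1 hpos
  refine ⟨a, b, hab, (Set.eq_of_subset_of_ncard_le ?_ ?_).symm⟩
  · exact Set.pair_subset ha hb
  · rw [hcard, Set.ncard_pair hab.ne]

namespace IsGDAPartition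

lemma card_le_degIn_compl_add_one (hP : IsGDAPartition G P) (hS : S ∈ P) (hv : v ∈ S) :
    P.card ≤ degIn G Sᶜ v + 1 := by
  have hmeet : ∀ T ∈ P.erase S, 1 ≤ (T ∩ {u | u ∈ Sᶜ ∧ G.Adj v u}).ncard := by
    intro T hT
    obtain ⟨hTS, hTP⟩ := Finset.mem_erase.1 hT
    have hdisj : Disjoint T S := hP.2.2 hTP hS hTS
    obtain ⟨u, hu, hvu⟩ := (hP.1 T hTP).2 v (Set.disjoint_right.1 hdisj hv)
    exact (Set.ncard_pos (Set.toFinite _)).2 ⟨u, hu, Set.disjoint_left.1 hdisj hu, hvu⟩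
  have hcount := mul_card_le_ncard_of_pairwise_disjoint
    (hP.2.2.mono (Finset.coe_subset.2 (P.erase_subset S))) hmeet
  rw [one_mul, Finset.card_erase_of_mem hS] at hcount
  exact Nat.le_add_of_sub_le hcount

lemma card_le_degIn_add_two (hP : IsGDAPartition G P) (hS : S ∈ P) (hv : v ∈ S) :
    P.card ≤ degIn G S v + 2 :=
  (hP.card_le_degIn_compl_add_one hS hv).trans (Nat.succ_le_succ ((hP.1 S hS).1.2 v hv))

lemma card_le_ncard_neighborSet (hP : IsGDAPartition G P) (hcard : 3 ≤ P.card) (v : V) :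
    P.card ≤ (G.neighborSet v).ncard := by
  obtain ⟨S, hS, hv⟩ := hP.exists_mem v
  have := hP.card_le_degIn_compl_add_one hS hv
  have := hP.card_le_degIn_add_two hS hv
  have := degIn_add_degIn_compl G S v
  omega

lemma sub_one_mul_card_le (hP : IsGDAPartition G P) : (P.card - 1) * P.card ≤ Nat.card V := by
  rw [← Set.ncard_univ]
  refine mul_card_le_ncard_of_pairwise_disjoint hP.2.2 fun S hS => ?_
  obtain ⟨v, hv⟩ := (hP.1 S hS).1.1
  have := hP.card_le_degIn_add_two hS hv
  have := degIn_lt_ncard (G := G) hv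
  rw [Set.inter_univ]
  omega

end IsGDAPartition

lemma hasCubicPerfectEdge_of_three_le_psiG (hgamma : gammaA G = 2) (hpsi : 3 ≤ psiG G) :
    HasCubicPerfectEdge G := by
  obtain ⟨P, hP, hPcard⟩ := exists_isGDAPartition_card_eq_psiG (G := G) (by omega)
  obtain ⟨S, hS, hScard⟩ := exists_isGlobalDefensiveAlliance_ncard_eq_gammaA (G := G) (by omega)
  rw [hgamma] at hScard
  rw [← hPcard] at hpsi
  obtain ⟨a, b, hab, rfl⟩ := hS.1.exists_adj_eq_pair hScard fun v _ =>
    (Nat.le_of_succ_le hpsi).trans (hP.card_le_ncard_neighborSet hpsi v)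
  have ha := hS.1.ncard_neighborSet_lt (v := a) (by simp)
  have hb := hS.1.ncard_neighborSet_lt (v := b) (by simp)
  have hcodisj := hS.2.codisjoint_neighborSet hab
  have hV : 6 ≤ Nat.card V :=
    (Nat.mul_le_mul (Nat.le_sub_one_of_lt hpsi) hpsi).trans hP.sub_one_mul_card_le
  have hcount := Set.ncard_union_add_ncard_inter (G.neighborSet a) (G.neighborSet b)
  have hunion : G.neighborSet a ∪ G.neighborSet b = Set.univ := hcodisj.eq_top
  rw [hunion, Set.ncard_univ] at hcount
  have hinter : G.neighborSet a ∩ G.neighborSet b = ∅ :=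
    (Set.ncard_eq_zero (Set.toFinite _)).1 (by omega)
  exact ⟨a, b, ⟨Set.disjoint_iff_inter_eq_empty.2 hinter, hcodisj⟩, by omega, by omega⟩

lemma isGlobalDefensiveAlliance_pair (h : IsCompl (G.neighborSet a) (G.neighborSet b))
    (ha : (G.neighborSet a).ncard ≤ 3) (hb : (G.neighborSet b).ncard ≤ 3) :
    IsGlobalDefensiveAlliance G {a, b} := by
  have hab := adj_of_codisjoint_neighborSet h.codisjoint
  refine ⟨⟨⟨a, Or.inl rfl⟩, fun v hv => ?_⟩, fun v _ => ?_⟩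
  · have hsplit := degIn_add_degIn_compl G {a, b} v
    rcases hv with rfl | rfl
    · have := one_le_degIn (S := {v, b}) (Or.inr rfl) hab
      omega
    · have := one_le_degIn (S := {a, v}) (Or.inl rfl) hab.symm
      omega
  · rcases codisjoint_neighborSet_iff.1 h.codisjoint v with hv | hv
    exacts [⟨a, Or.inl rfl, hv.symm⟩, ⟨b, Or.inr rfl, hv.symm⟩]

lemma two_le_psiG_of_compl (hS : IsGlobalDefensiveAlliance G S)
    (hSc : IsGlobalDefensiveAlliance G Sᶜ) : 2 ≤ psiG G := by
  have hne : S ≠ Sᶜ := fun h => hS.1.1.elim fun v hv => (h ▸ hv : v ∈ Sᶜ) hv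
  have hP : IsGDAPartition G {S, Sᶜ} := by
    refine ⟨by simp [hS, hSc], by simp, ?_⟩
    rw [Finset.coe_pair]
    exact Set.pairwise_pair_of_symm.2 fun _ => disjoint_compl_right
  exact (Finset.card_pair hne).symm.trans_le hP.card_le_psiG

lemma HasCubicPerfectEdge.two_le_psiG (h : HasCubicPerfectEdge G) : 2 ≤ psiG G := by
  obtain ⟨a, b, hab, ha, hb⟩ := h
  exact two_le_psiG_of_compl (isGlobalDefensiveAlliance_pair hab ha.le hb.le)
    (isGlobalDefensiveAlliance_compl_pair hab.disjoint (by omega) (by omega))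

end Graph

open Ideal

section Ring

variable {R : Type*} [CommRing R] {v w : ZDV R}

lemma mem_torsionOf_of_adj (h : (zdGraph R).Adj v w) : (w : R) ∈ torsionOf R R (v : R) :=
  (mul_comm (w : R) v).trans h.2

lemma zdGraph_adj_iff_mem_torsionOf (hv : (v : R) * v ≠ 0) :
    (zdGraph R).Adj v w ↔ (w : R) ∈ torsionOf R R (v : R) := by
  refine ⟨mem_torsionOf_of_adj, fun h => ⟨?_, (mul_comm (v : R) w).trans h⟩⟩
  rintro rfl
  exact hv h

lemma image_val_neighborSet (v : ZDV R) :
    Subtype.val '' (zdGraph R).neighborSet v = (torsionOf R R (v : R) : Set R) \ {0, (v : R)} := by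
  ext x
  constructor
  · rintro ⟨u, hu, rfl⟩
    refine ⟨mem_torsionOf_of_adj hu, ?_⟩
    rintro (h0 | hv)
    exacts [u.2.1 h0, hu.1 (Subtype.ext hv).symm]
  · rintro ⟨hx, hne⟩
    have hx0 : x ≠ 0 := fun h => hne (Or.inl h)
    refine ⟨⟨x, hx0, v, v.2.1, hx⟩, ⟨?_, (mul_comm (v : R) x).trans hx⟩, rfl⟩
    exact fun h => hne (Or.inr (congrArg Subtype.val h).symm)

lemma isCompl_neighborSet_iff (hv : (v : R) * v ≠ 0) (hw : (w : R) * w ≠ 0) :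
    IsCompl ((zdGraph R).neighborSet v) ((zdGraph R).neighborSet w) ↔
      Disjoint (torsionOf R R (v : R)) (torsionOf R R (w : R)) ∧
        zeroDivisorSet R ⊆ torsionOf R R (v : R) ∪ torsionOf R R (w : R) := by
  rw [isCompl_iff, Set.disjoint_left, codisjoint_neighborSet_iff, Submodule.disjoint_def]
  simp only [SimpleGraph.mem_neighborSet, zdGraph_adj_iff_mem_torsionOf hv,
    zdGraph_adj_iff_mem_torsionOf hw]
  refine and_congr ⟨fun h x hxv hxw => ?_, fun h u huv huw => u.2.1 (h u huv huw)⟩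
    ⟨fun h x hx => ?_, fun h u => h u.2.2⟩
  · by_contra hx
    exact h (a := ⟨x, hx, v, v.2.1, hxv⟩) hxv hxw
  · obtain rfl | hx0 := eq_or_ne x 0
    exacts [Or.inl (Submodule.zero_mem _), h ⟨x, hx0, hx⟩]

section CRT

variable {I J : Ideal R}

-- The translates `x + i` with `i ∈ I` are all killed by `z`, so if `x ∉ I` then they all lie
-- in `J`, and so does `I`.
lemma mem_of_mul_eq_zero_of_zeroDivisorSet_subset (hIJ : Disjoint I J) (hI : I ≠ ⊥)
    (hzd : zeroDivisorSet R ⊆ I ∪ J) {x z : R} (hz : z ∈ J) (hz0 : z ≠ 0) (hxz : x * z = 0) :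
    x ∈ I := by
  by_contra hx
  have htranslate : ∀ i ∈ I, x + i ∈ J := by
    intro i hi
    have hiz : i * z = 0 :=
      Submodule.disjoint_def.1 hIJ _ (I.mul_mem_right z hi) (J.mul_mem_left i hz)
    refine (hzd ⟨z, hz0, by rw [add_mul, hxz, hiz, add_zero]⟩).resolve_left fun h => ?_
    exact hx ((I.add_mem_iff_left hi).1 h)
  have hxJ : x ∈ J := by simpa only [add_zero] using htranslate 0 I.zero_mem
  obtain ⟨i, hi, hi0⟩ := Submodule.exists_mem_ne_zero_of_ne_bot hI
  exact hi0 (Submodule.disjoint_def.1 hIJ i hi ((J.add_mem_iff_right hxJ).1 (htranslate i hi)))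

lemma isPrime_of_zeroDivisorSet_subset (hIJ : Disjoint I J) (hI : I ≠ ⊥) (hJ : J ≠ ⊥)
    (hzd : zeroDivisorSet R ⊆ I ∪ J) : I.IsPrime := by
  obtain ⟨z, hz, hz0⟩ := Submodule.exists_mem_ne_zero_of_ne_bot hJ
  refine ⟨fun htop => hJ (disjoint_top.1 (htop ▸ hIJ).symm), fun {x y} hxy => ?_⟩
  refine or_iff_not_imp_right.2 fun hy => ?_
  have hyz : y * z ≠ 0 := fun h =>
    hy (mem_of_mul_eq_zero_of_zeroDivisorSet_subset hIJ hI hzd hz hz0 h)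
  refine mem_of_mul_eq_zero_of_zeroDivisorSet_subset hIJ hI hzd (J.mul_mem_left y hz) hyz ?_
  rw [← mul_assoc]
  exact Submodule.disjoint_def.1 hIJ _ (I.mul_mem_right z hxy) (J.mul_mem_left _ hz)

end CRT

lemma nonempty_ringEquiv_of_natCard_eq [IsDomain R] [Finite R] {K : Type*} [Field K]
    (h : Nat.card R = Nat.card K) : Nonempty (R ≃+* K) := by
  have : Finite K := Nat.finite_of_card_ne_zero (h ▸ Nat.card_pos.ne')
  have := Fintype.ofFinite R
  have := Fintype.ofFinite K
  let := Fintype.fieldOfDomain R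
  exact ⟨FiniteField.ringEquivOfCardEq (by simpa only [Nat.card_eq_fintype_card] using h)⟩

section Finite

variable [Finite R]

lemma ncard_neighborSet_add_one (hv : (v : R) * v ≠ 0) :
    ((zdGraph R).neighborSet v).ncard + 1 = Nat.card (torsionOf R R (v : R)) := by
  have hmem : (v : R) ∉ (torsionOf R R (v : R) : Set R) \ {0} := fun h => hv h.1
  rw [← Set.ncard_image_of_injective _ Subtype.val_injective, image_val_neighborSet,
    Set.insert_eq, ← Set.sdiff_sdiff, Set.sdiff_singleton_eq_self hmem]
  exact Set.ncard_sdiff_singleton_add_one (zero_mem (torsionOf R R (v : R)))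

lemma ncard_neighborSet_add_two (hv : (v : R) * v = 0) :
    ((zdGraph R).neighborSet v).ncard + 2 = Nat.card (torsionOf R R (v : R)) := by
  rw [← Set.ncard_image_of_injective _ Subtype.val_injective, image_val_neighborSet,
    ← Set.ncard_pair v.2.1.symm]
  exact Set.ncard_sdiff_add_ncard_of_subset (Set.pair_subset (zero_mem _) hv)

-- If `v * v = 0`, the annihilator of `v` has prime order, so it is generated by `v`; it contains
-- `w`, hence every neighbor of `v` other than `w` is a neighbor of `w`.
lemma mul_self_ne_zero_of_prime_ncard_neighborSet_add_two (hvw : (zdGraph R).Adj v w)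
    (hdisj : Disjoint ((zdGraph R).neighborSet v) ((zdGraph R).neighborSet w))
    (hdeg : 2 ≤ ((zdGraph R).neighborSet v).ncard)
    (hprime : (((zdGraph R).neighborSet v).ncard + 2).Prime) : (v : R) * v ≠ 0 := by
  intro hv
  have := Fact.mk hprime
  have hgen : (⟨w, mem_torsionOf_of_adj hvw⟩ : torsionOf R R (v : R)) ∈
      AddSubgroup.zmultiples ⟨(v : R), hv⟩ :=
    mem_zmultiples_of_prime_card (ncard_neighborSet_add_two hv).symm
      fun h => v.2.1 (congrArg Subtype.val h)
  obtain ⟨k, hk⟩ := AddSubgroup.mem_zmultiples_iff.1 hgen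
  have hwv : (w : R) = k • (v : R) := (congrArg Subtype.val hk).symm
  obtain ⟨c, hvc, hcw⟩ := Set.exists_ne_of_one_lt_ncard hdeg w
  refine Set.disjoint_left.1 hdisj hvc ⟨hcw.symm, ?_⟩
  rw [hwv, smul_mul_assoc, hvc.2, smul_zero]

lemma nonempty_ringEquiv_prod_of_zeroDivisorSet_subset {I J : Ideal R} (hIJ : Disjoint I J)
    (hI : I ≠ ⊥) (hJ : J ≠ ⊥) (hzd : zeroDivisorSet R ⊆ I ∪ J) {K L : Type*} [Field K] [Field L]
    (hK : Nat.card J = Nat.card K) (hL : Nat.card I = Nat.card L) :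
    Nonempty (R ≃+* K × L) := by
  have hIprime := isPrime_of_zeroDivisorSet_subset hIJ hI hJ hzd
  have hJprime := isPrime_of_zeroDivisorSet_subset hIJ.symm hJ hI
    (hzd.trans_eq (Set.union_comm _ _))
  have : Finite (R ⧸ I) := Finite.of_surjective _ Quotient.mk_surjective
  have : Finite (R ⧸ J) := Finite.of_surjective _ Quotient.mk_surjective
  have hcoprime : IsCoprime I J := isCoprime_of_isMaximal (hIJ.ne hI)
  let crt : R ≃+* (R ⧸ I) × (R ⧸ J) :=
    (RingEquiv.quotientBot R).symm.trans <|
      (quotEquivOfEq hIJ.eq_bot.symm).trans (quotientInfEquivQuotientProd I J hcoprime)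
  have hcrt : Nat.card R = Nat.card (R ⧸ I) * Nat.card (R ⧸ J) :=
    (Nat.card_congr crt.toEquiv).trans (Nat.card_prod _ _)
  have hRI : Nat.card R = Nat.card I * Nat.card (R ⧸ I) :=
    Submodule.card_eq_card_quotient_mul_card I
  have hRJ : Nat.card R = Nat.card J * Nat.card (R ⧸ J) :=
    Submodule.card_eq_card_quotient_mul_card J
  have hIK : Nat.card (R ⧸ I) = Nat.card K :=
    Nat.eq_of_mul_eq_mul_right (Nat.card_pos (α := R ⧸ J)) (by rw [← hcrt, hRJ, hK])
  have hJL : Nat.card (R ⧸ J) = Nat.card L :=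
    Nat.eq_of_mul_eq_mul_left (Nat.card_pos (α := R ⧸ I)) (by rw [← hcrt, hRI, hL, mul_comm])
  obtain ⟨eK⟩ := nonempty_ringEquiv_of_natCard_eq hIK
  obtain ⟨eL⟩ := nonempty_ringEquiv_of_natCard_eq hJL
  exact ⟨crt.trans (eK.prodCongr eL)⟩

lemma nonempty_ringEquiv_prod_of_hasCubicPerfectEdge (h : HasCubicPerfectEdge (zdGraph R))
    {K L : Type*} [Field K] [Field L] (hK : Nat.card K = 4) (hL : Nat.card L = 4) :
    Nonempty (R ≃+* K × L) := by
  obtain ⟨a, b, hcompl, ha, hb⟩ := h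
  have hab := adj_of_codisjoint_neighborSet hcompl.codisjoint
  have ha2 : (a : R) * a ≠ 0 := mul_self_ne_zero_of_prime_ncard_neighborSet_add_two hab
    hcompl.disjoint (by omega) (by norm_num [ha])
  have hb2 : (b : R) * b ≠ 0 := mul_self_ne_zero_of_prime_ncard_neighborSet_add_two hab.symm
    hcompl.disjoint.symm (by omega) (by norm_num [hb])
  obtain ⟨hdisj, hzd⟩ := (isCompl_neighborSet_iff ha2 hb2).1 hcompl
  refine nonempty_ringEquiv_prod_of_zeroDivisorSet_subset hdisj ?_ ?_ hzd ?_ ?_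
  · exact Submodule.ne_bot_iff _ |>.2 ⟨b, mem_torsionOf_of_adj hab, b.2.1⟩
  · exact Submodule.ne_bot_iff _ |>.2 ⟨a, mem_torsionOf_of_adj hab.symm, a.2.1⟩
  · rw [← ncard_neighborSet_add_one hb2, hb, hK]
  · rw [← ncard_neighborSet_add_one ha2, ha, hL]

end Finite

section Prod

variable {A B : Type*} [CommRing A] [CommRing B] (e : R ≃+* A × B)

lemma mem_torsionOf_symm_one_zero {x : R} :
    x ∈ torsionOf R R (e.symm (1, 0)) ↔ (e x).1 = 0 := by
  rw [mem_torsionOf_iff, smul_eq_mul, ← e.map_eq_zero_iff, map_mul, e.apply_symm_apply]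
  simp [Prod.ext_iff]

lemma mem_torsionOf_symm_zero_one {x : R} :
    x ∈ torsionOf R R (e.symm (0, 1)) ↔ (e x).2 = 0 :=
  mem_torsionOf_symm_one_zero (e.trans RingEquiv.prodComm)

lemma card_torsionOf_symm_one_zero : Nat.card (torsionOf R R (e.symm (1, 0))) = Nat.card B := by
  refine Nat.card_congr
    { toFun := fun x => (e x).2
      invFun := fun y => ⟨e.symm (0, y), (mem_torsionOf_symm_one_zero e).2 (by simp)⟩
      left_inv := fun x => Subtype.ext (e.injective ?_)
      right_inv := fun y => by simp }
  rw [e.apply_symm_apply]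
  exact Prod.ext ((mem_torsionOf_symm_one_zero e).1 x.2).symm rfl

lemma card_torsionOf_symm_zero_one : Nat.card (torsionOf R R (e.symm (0, 1))) = Nat.card A :=
  card_torsionOf_symm_one_zero (e.trans RingEquiv.prodComm)

lemma disjoint_torsionOf_symm :
    Disjoint (torsionOf R R (e.symm (1, 0))) (torsionOf R R (e.symm (0, 1))) :=
  Submodule.disjoint_def.2 fun _ h₁ h₂ => (map_eq_zero_iff e e.injective).1 <|
    Prod.ext ((mem_torsionOf_symm_one_zero e).1 h₁) ((mem_torsionOf_symm_zero_one e).1 h₂)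

lemma zeroDivisorSet_subset_torsionOf_symm [IsDomain A] [IsDomain B] :
    zeroDivisorSet R ⊆ torsionOf R R (e.symm (1, 0)) ∪ torsionOf R R (e.symm (0, 1)) := by
  rintro x ⟨y, hy, hxy⟩
  have hmul : e x * e y = 0 := by rw [← map_mul, hxy, map_zero]
  by_contra hx
  simp only [Set.mem_union, SetLike.mem_coe, mem_torsionOf_symm_one_zero,
    mem_torsionOf_symm_zero_one, not_or] at hx
  refine hy ((map_eq_zero_iff e e.injective).1 (Prod.ext ?_ ?_))
  · exact (mul_eq_zero.1 (congrArg Prod.fst hmul)).resolve_left hx.1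
  · exact (mul_eq_zero.1 (congrArg Prod.snd hmul)).resolve_left hx.2

end Prod

lemma hasCubicPerfectEdge_of_ringEquiv_prod [Finite R] {A B : Type*} [CommRing A] [IsDomain A]
    [CommRing B] [IsDomain B] (e : R ≃+* A × B) (hA : Nat.card A = 4) (hB : Nat.card B = 4) :
    HasCubicPerfectEdge (zdGraph R) := by
  have hmul : e.symm (1, 0) * e.symm (0, 1) = 0 := by rw [← map_mul]; simp
  have ha0 : e.symm (1, 0) ≠ 0 := by simp
  have hb0 : e.symm (0, 1) ≠ 0 := by simp
  let a : ZDV R := ⟨e.symm (1, 0), ha0, _, hb0, hmul⟩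
  let b : ZDV R := ⟨e.symm (0, 1), hb0, _, ha0, (mul_comm _ _).trans hmul⟩
  have ha : (a : R) * a ≠ 0 := by rw [← map_mul]; simp
  have hb : (b : R) * b ≠ 0 := by rw [← map_mul]; simp
  refine ⟨a, b, (isCompl_neighborSet_iff ha hb).2
    ⟨disjoint_torsionOf_symm e, zeroDivisorSet_subset_torsionOf_symm e⟩, ?_, ?_⟩
  · exact Nat.succ_injective ((ncard_neighborSet_add_one ha).trans
      ((card_torsionOf_symm_one_zero e).trans hB))
  · exact Nat.succ_injective ((ncard_neighborSet_add_one hb).trans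
      ((card_torsionOf_symm_zero_one e).trans hA))

lemma hasCubicPerfectEdge_zdGraph_iff [Finite R] :
    HasCubicPerfectEdge (zdGraph R) ↔
      Nonempty (R ≃+* GaloisField 2 2 × GaloisField 2 2) := by
  have hcard : Nat.card (GaloisField 2 2) = 4 := GaloisField.card 2 2 two_ne_zero
  exact ⟨fun h => nonempty_ringEquiv_prod_of_hasCubicPerfectEdge h hcard hcard,
    fun ⟨e⟩ => hasCubicPerfectEdge_of_ringEquiv_prod e hcard hcard⟩

end Ring

/-- For a finite commutative ring `R` with `γ_a(Γ(R)) = 2`, `Γ(R)` is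
partitionable into global defensive alliances iff either `ψ_g(Γ(R)) = 2` or
`R ≅ 𝔽₄ × 𝔽₄`. -/
theorem stmt18 (R : Type*) [CommRing R] [Finite R] [Nontrivial R]
    (h : gammaA (zdGraph R) = 2) :
    PartitionableGDA (zdGraph R) ↔
      (psiG (zdGraph R) = 2 ∨
        Nonempty (R ≃+* (GaloisField 2 2 × GaloisField 2 2))) := by
  constructor
  · intro (hpsi : 2 ≤ psiG (zdGraph R))
    rcases hpsi.eq_or_lt with hpsi | hpsi
    · exact Or.inl hpsi.symm
    · exact Or.inr (hasCubicPerfectEdge_zdGraph_iff.1 (hasCubicPerfectEdge_of_three_le_psiG h hpsi))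
  · rintro (hpsi | hR)
    · exact hpsi.ge
    · exact (hasCubicPerfectEdge_zdGraph_iff.2 hR).two_le_psiG
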